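/- Let F₂ be the free group on two generators a and b, and let κ > 0. There exists a family (ρ_t)_{t ∈ [0,1]} of group homomorphisms ρ_t : F₂ → SL(2,ℝ) with the following properties. (1) Continuity in t: for every γ ∈ F₂, the map t ↦ ρ_t(γ) is continuous on [0,1]. (2) μ(ρ₀(γ)) ≥ κ·ℓ_a(γ) for all γ ∈ F₂. (3) For every irrational t ∈ [0,1]: the image ρ_t(F₂) is dense in SL(2,ℝ); the element ρ_t(a) is hyperbolic, i.e. |trace(ρ_t(a))| > 2; and the element ρ_t(b) is elliptic, i.e. |trace(ρ_t(b))| < 2. -/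

import Mathlib

open Matrix

/-- The operator norm of a `2 × 2` real matrix acting on Euclidean `ℝ²`. -/
noncomputable def opNorm2 (M : Matrix (Fin 2) (Fin 2) ℝ) : ℝ :=
  ‖LinearMap.toContinuousLinearMap (Matrix.toEuclideanLin M)‖

/-- The Cartan projection `μ(g) = 2 log ‖g‖` of `SL(2,ℝ)`, identifying the closed positive
Weyl chamber with `ℝ≥0`. -/
noncomputable def mu2 (g : Matrix.SpecialLinearGroup (Fin 2) ℝ) : ℝ :=
  2 * Real.log (opNorm2 (g : Matrix (Fin 2) (Fin 2) ℝ))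

/-- The number of letters equal to `a` or `a⁻¹` in the reduced word of an element of the
free group on the two generators `a = FreeGroup.of 0` and `b = FreeGroup.of 1`. -/
def lenA (γ : FreeGroup (Fin 2)) : ℕ :=
  (FreeGroup.toWord γ).countP fun p => decide (p.1 = 0)

/-!
The representation `ρ_t` sends `a` to a fixed hyperbolic element and `b` to a path that starts at a
parabolic element and continues through elliptic elements of rotation angle `π t`. At `t = 0` the
two elements play ping-pong on the slopes of vectors of the plane, and every letter `a` or `a⁻¹` of
a reduced word stretches the first coordinate of the image of the first basis vector by at least
`exp (κ / 2)`, whence the bound on `μ`. For irrational `t` the closure of the image contains a full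
circle of rotations, up to conjugacy, because `ρ_t(b)` has infinite order in that circle. A subgroup
`H` containing `SO(2)` and a non-orthogonal element is everything: `H` is a union of double cosets
of `SO(2)`, which are classified by the Frobenius norm, and the elements `g * k * g⁻¹` with `g` in
`H` and `k` in `SO(2)` realize every value of that norm.
-/

open scoped MatrixGroups

lemma fin_two_of_congr {α : Type*} {a b c d a' b' c' d' : α} (ha : a = a') (hb : b = b')
    (hc : c = c') (hd : d = d') : !![a, b; c, d] = !![a', b'; c', d'] := by
  rw [ha, hb, hc, hd]

lemma continuous_fin_two_of {X R : Type*} [TopologicalSpace X] [TopologicalSpace R]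
    {a b c d : X → R} (ha : Continuous a) (hb : Continuous b) (hc : Continuous c)
    (hd : Continuous d) : Continuous fun x ↦ !![a x, b x; c x, d x] :=
  continuous_matrix (Fin.forall_fin_two.2
    ⟨Fin.forall_fin_two.2 ⟨ha, hb⟩, Fin.forall_fin_two.2 ⟨hc, hd⟩⟩)

section Rotations

/-- The rotation of angle `φ`, as an element of `SL(2, ℝ)`. -/
noncomputable def rot (φ : ℝ) : SL(2, ℝ) :=
  ⟨!![Real.cos φ, -Real.sin φ; Real.sin φ, Real.cos φ], by
    rw [det_fin_two_of]; linear_combination Real.cos_sq_add_sin_sq φ⟩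

lemma coe_rot (φ : ℝ) :
    (rot φ : Matrix (Fin 2) (Fin 2) ℝ) =
      !![Real.cos φ, -Real.sin φ; Real.sin φ, Real.cos φ] :=
  rfl

@[simp]
lemma rot_zero : rot 0 = 1 :=
  Subtype.ext (by simp [coe_rot, one_fin_two])

@[simp]
lemma rot_two_pi : rot (2 * Real.pi) = 1 :=
  Subtype.ext (by simp [coe_rot, one_fin_two])

lemma rot_add (φ ψ : ℝ) : rot (φ + ψ) = rot φ * rot ψ := by
  apply Subtype.ext
  rw [Matrix.SpecialLinearGroup.coe_mul, coe_rot, coe_rot, coe_rot, mul_fin_two, Real.cos_add,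
    Real.sin_add]
  apply fin_two_of_congr <;> ring

lemma rot_neg (φ : ℝ) : rot (-φ) = (rot φ)⁻¹ :=
  eq_inv_of_mul_eq_one_left (by rw [← rot_add, neg_add_cancel, rot_zero])

lemma continuous_rot : Continuous rot :=
  (continuous_fin_two_of Real.continuous_cos Real.continuous_sin.neg Real.continuous_sin
    Real.continuous_cos).subtype_mk _

lemma rot_mem_of_irrational {H : Subgroup SL(2, ℝ)} (hH : IsClosed (H : Set SL(2, ℝ)))
    {t : ℝ} (ht : Irrational t) (hmem : rot (Real.pi * t) ∈ H) (φ : ℝ) : rot φ ∈ H := by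
  let angles : AddSubgroup ℝ :=
    { carrier := rot ⁻¹' H
      zero_mem' := by simp
      add_mem' := fun {φ ψ} hφ hψ ↦ by
        simpa only [Set.mem_preimage, SetLike.mem_coe, rot_add] using H.mul_mem hφ hψ
      neg_mem' := fun {φ} hφ ↦ by
        simpa only [Set.mem_preimage, SetLike.mem_coe, rot_neg] using H.inv_mem hφ }
  have hclosed : IsClosed (angles : Set ℝ) := hH.preimage continuous_rot
  have hdense : Dense (AddSubgroup.closure {Real.pi * t, 2 * Real.pi} : Set ℝ) := by
    rw [dense_addSubgroupClosure_pair_iff, mul_comm 2, mul_div_mul_left _ _ Real.pi_ne_zero]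
    exact ht.div_natCast two_ne_zero
  have hle : AddSubgroup.closure {Real.pi * t, 2 * Real.pi} ≤ angles := by
    rw [AddSubgroup.closure_le, Set.pair_subset_iff]
    exact ⟨hmem, show rot (2 * Real.pi) ∈ H by simp⟩
  exact hclosed.closure_subset_iff.2 hle (hdense φ)

end Rotations

section FrobeniusNorm

/-- The square of the Frobenius norm. On `SL(2, ℝ)` it classifies the double cosets of the group
of rotations, see `exists_eq_rot_mul_mul_rot`. -/
def frobSq (M : Matrix (Fin 2) (Fin 2) ℝ) : ℝ :=
  M 0 0 ^ 2 + M 0 1 ^ 2 + M 1 0 ^ 2 + M 1 1 ^ 2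

lemma det_eq_one_fin_two (g : SL(2, ℝ)) : g 0 0 * g 1 1 - g 0 1 * g 1 0 = 1 := by
  rw [← det_fin_two]; exact g.det_coe

lemma two_le_frobSq (g : SL(2, ℝ)) : 2 ≤ frobSq g := by
  have : frobSq g = 2 + (g 0 0 - g 1 1) ^ 2 + (g 0 1 + g 1 0) ^ 2 := by
    unfold frobSq; linear_combination 2 * det_eq_one_fin_two g
  nlinarith

lemma two_lt_frobSq_of_two_lt_abs_trace {g : SL(2, ℝ)}
    (hg : 2 < |trace (g : Matrix (Fin 2) (Fin 2) ℝ)|) :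
    2 < frobSq g := by
  have hsq : 2 ^ 2 < trace (g : Matrix (Fin 2) (Fin 2) ℝ) ^ 2 := sq_lt_sq.2 (by simpa using hg)
  have : frobSq g = trace (g : Matrix (Fin 2) (Fin 2) ℝ) ^ 2 - 2 + (g 0 1 - g 1 0) ^ 2 := by
    rw [trace_fin_two]; unfold frobSq; linear_combination -2 * det_eq_one_fin_two g
  nlinarith

lemma coe_mul_rot_mul_inv (g : SL(2, ℝ)) (φ : ℝ) :
    ((g * rot φ * g⁻¹ : SL(2, ℝ)) : Matrix (Fin 2) (Fin 2) ℝ) =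
      !![Real.cos φ + Real.sin φ * (g 0 0 * g 1 0 + g 0 1 * g 1 1),
          -(Real.sin φ * (g 0 0 ^ 2 + g 0 1 ^ 2));
        Real.sin φ * (g 1 0 ^ 2 + g 1 1 ^ 2),
          Real.cos φ - Real.sin φ * (g 0 0 * g 1 0 + g 0 1 * g 1 1)] := by
  have hg := det_eq_one_fin_two g
  conv_lhs => rw [Matrix.SpecialLinearGroup.coe_mul, Matrix.SpecialLinearGroup.coe_mul,
    Matrix.SpecialLinearGroup.coe_inv, coe_rot, eta_fin_two (g : Matrix (Fin 2) (Fin 2) ℝ),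
    adjugate_fin_two_of, mul_fin_two, mul_fin_two]
  apply fin_two_of_congr
  · linear_combination Real.cos φ * hg
  · ring
  · ring
  · linear_combination Real.cos φ * hg

lemma frobSq_mul_rot_mul_inv (g : SL(2, ℝ)) (φ : ℝ) :
    frobSq (g * rot φ * g⁻¹ : SL(2, ℝ)) = 2 + Real.sin φ ^ 2 * (frobSq g ^ 2 - 4) := by
  have hg := det_eq_one_fin_two g
  have hφ := Real.cos_sq_add_sin_sq φ
  rw [coe_mul_rot_mul_inv]
  simp only [frobSq, of_apply, cons_val', cons_val_zero, cons_val_one, cons_val_fin_one]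
  linear_combination 2 * hφ - 2 * Real.sin φ ^ 2 * (g 0 0 * g 1 1 - g 0 1 * g 1 0 + 1) * hg

lemma exists_eq_exp_mul_I_mul {z w : ℂ} (h : ‖z‖ = ‖w‖) :
    ∃ u : ℝ, w = Complex.exp (u * Complex.I) * z := by
  refine ⟨w.arg - z.arg, ?_⟩
  calc w = ‖z‖ * Complex.exp (w.arg * Complex.I) := by rw [h, Complex.norm_mul_exp_arg_mul_I]
    _ = Complex.exp ((w.arg - z.arg) * Complex.I) * (‖z‖ * Complex.exp (z.arg * Complex.I)) := by
      rw [mul_left_comm, ← Complex.exp_add]; ring_nf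
    _ = Complex.exp (↑(w.arg - z.arg) * Complex.I) * z := by
      rw [Complex.norm_mul_exp_arg_mul_I, Complex.ofReal_sub]

lemma exists_rotation_of_sq_add_sq_eq {x y x' y' : ℝ} (h : x ^ 2 + y ^ 2 = x' ^ 2 + y' ^ 2) :
    ∃ u : ℝ, x' = x * Real.cos u - y * Real.sin u ∧ y' = x * Real.sin u + y * Real.cos u := by
  have hnorm : ‖(⟨x, y⟩ : ℂ)‖ = ‖(⟨x', y'⟩ : ℂ)‖ := by
    simp only [Complex.norm_def, Complex.normSq_mk, ← sq, h]
  obtain ⟨u, hu⟩ := exists_eq_exp_mul_I_mul hnorm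
  rw [Complex.ext_iff, Complex.mul_re, Complex.mul_im, Complex.exp_ofReal_mul_I_re,
    Complex.exp_ofReal_mul_I_im] at hu
  exact ⟨u, by linear_combination hu.1, by linear_combination hu.2⟩

-- In the coordinates `(p + s) + (r - q)i` and `(p - s) + (r + q)i` of a matrix `!![p, q; r, s]`,
-- multiplying by `rot φ` on the left and `rot ψ` on the right rotates the former by `φ + ψ` and the
-- latter by `φ - ψ`; for determinant one, `frobSq` determines the modulus of both.
lemma exists_eq_rot_mul_mul_rot {g h : SL(2, ℝ)} (hgh : frobSq g = frobSq h) :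
    ∃ φ ψ : ℝ, h = rot φ * g * rot ψ := by
  have hg := det_eq_one_fin_two g
  have hh := det_eq_one_fin_two h
  unfold frobSq at hgh
  obtain ⟨u, hu₁, hu₂⟩ := exists_rotation_of_sq_add_sq_eq
    (x := g 0 0 + g 1 1) (y := g 1 0 - g 0 1) (x' := h 0 0 + h 1 1) (y' := h 1 0 - h 0 1)
    (by linear_combination hgh + 2 * hg - 2 * hh)
  obtain ⟨v, hv₁, hv₂⟩ := exists_rotation_of_sq_add_sq_eq
    (x := g 0 0 - g 1 1) (y := g 1 0 + g 0 1) (x' := h 0 0 - h 1 1) (y' := h 1 0 + h 0 1)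
    (by linear_combination hgh - 2 * hg + 2 * hh)
  obtain ⟨φ, ψ, rfl, rfl⟩ : ∃ φ ψ : ℝ, u = φ + ψ ∧ v = φ - ψ :=
    ⟨(u + v) / 2, (u - v) / 2, by ring, by ring⟩
  rw [Real.cos_add, Real.sin_add] at hu₁ hu₂
  rw [Real.cos_sub, Real.sin_sub] at hv₁ hv₂
  refine ⟨φ, ψ, Subtype.ext ?_⟩
  rw [Matrix.SpecialLinearGroup.coe_mul, Matrix.SpecialLinearGroup.coe_mul, coe_rot, coe_rot,
    eta_fin_two (g : Matrix (Fin 2) (Fin 2) ℝ), eta_fin_two (h : Matrix (Fin 2) (Fin 2) ℝ),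
    mul_fin_two, mul_fin_two]
  apply fin_two_of_congr
  · linear_combination (hu₁ + hv₁) / 2
  · linear_combination (hv₂ - hu₂) / 2
  · linear_combination (hv₂ + hu₂) / 2
  · linear_combination (hu₁ - hv₁) / 2

end FrobeniusNorm

section Density

lemma sin_pi_mul_ne_zero_of_irrational {t : ℝ} (ht : Irrational t) :
    Real.sin (Real.pi * t) ≠ 0 := by
  rw [Ne, Real.sin_eq_zero_iff]
  rintro ⟨n, hn⟩
  exact ht.ne_int n (mul_left_cancel₀ Real.pi_ne_zero (by rw [← hn, mul_comm]))

variable {H : Subgroup SL(2, ℝ)} {g : SL(2, ℝ)}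

lemma exists_mem_frobSq_eq (hrot : ∀ φ, rot φ ∈ H) (hg : g ∈ H) {x : ℝ} (hx : 2 ≤ x)
    (hxg : x ≤ frobSq g ^ 2 - 2) : ∃ h ∈ H, frobSq h = x := by
  let q : ℝ := (x - 2) / (frobSq g ^ 2 - 4)
  have hq₀ : 0 ≤ q := div_nonneg (by linarith) (by linarith)
  have hq₁ : q ≤ 1 := div_le_one_of_le₀ (by linarith) (by linarith)
  have hq : q * (frobSq g ^ 2 - 4) = x - 2 := div_mul_cancel_of_imp (by intro; linarith)
  have hsin : Real.sin (Real.arcsin √q) = √q :=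
    Real.sin_arcsin (by linarith [Real.sqrt_nonneg q]) (Real.sqrt_le_one.2 hq₁)
  refine ⟨g * rot (Real.arcsin √q) * g⁻¹, H.mul_mem (H.mul_mem hg (hrot _)) (H.inv_mem hg), ?_⟩
  rw [frobSq_mul_rot_mul_inv, hsin, Real.sq_sqrt hq₀, hq]
  ring

lemma exists_mem_four_pow_mul_le_frobSq (hrot : ∀ φ, rot φ ∈ H) (hg : g ∈ H) (n : ℕ) :
    ∃ h ∈ H, 4 ^ n * (frobSq g - 2) ≤ frobSq h - 2 := by
  induction n with
  | zero => exact ⟨g, hg, by simp⟩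
  | succ n ih =>
    obtain ⟨h, hh, hle⟩ := ih
    refine ⟨h * rot (Real.pi / 2) * h⁻¹, H.mul_mem (H.mul_mem hh (hrot _)) (H.inv_mem hh), ?_⟩
    have h_two_le := two_le_frobSq h
    calc 4 ^ (n + 1) * (frobSq g - 2) = 4 * (4 ^ n * (frobSq g - 2)) := by ring
      _ ≤ 4 * (frobSq h - 2) := by gcongr
      _ ≤ frobSq h ^ 2 - 4 := by nlinarith
      _ = frobSq (h * rot (Real.pi / 2) * h⁻¹ : SL(2, ℝ)) - 2 := by
        rw [frobSq_mul_rot_mul_inv, Real.sin_pi_div_two]; ring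

lemma eq_top_of_rot_mem (hrot : ∀ φ, rot φ ∈ H) (hg : g ∈ H) (hg₂ : 2 < frobSq g) : H = ⊤ := by
  refine (Subgroup.eq_top_iff' H).2 fun x ↦ ?_
  obtain ⟨n, hn⟩ := pow_unbounded_of_one_lt (frobSq x / (frobSq g - 2)) (by norm_num : (1 : ℝ) < 4)
  rw [div_lt_iff₀ (by linarith)] at hn
  obtain ⟨k, hk, hle⟩ := exists_mem_four_pow_mul_le_frobSq hrot hg n
  obtain ⟨h, hh, hhx⟩ := exists_mem_frobSq_eq hrot hk (two_le_frobSq x)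
    (by nlinarith [two_le_frobSq k])
  obtain ⟨φ, ψ, rfl⟩ := exists_eq_rot_mul_mul_rot hhx
  exact H.mul_mem (H.mul_mem (hrot φ) hh) (hrot ψ)

-- The sign of `b 1 0` records the sense of rotation of `b`, a conjugacy invariant in `SL(2, ℝ)`.
lemma isConj_rot_of_trace_eq {b : SL(2, ℝ)} {φ : ℝ}
    (htr : trace (b : Matrix (Fin 2) (Fin 2) ℝ) = 2 * Real.cos φ)
    (hpos : 0 < b 1 0 * Real.sin φ) : IsConj (rot φ) b := by
  have hb := det_eq_one_fin_two b
  have hφ := Real.cos_sq_add_sin_sq φ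
  rw [trace_fin_two] at htr
  have hsin : Real.sin φ ≠ 0 := right_ne_zero_of_mul hpos.ne'
  have hb₁₀ : b 1 0 ≠ 0 := left_ne_zero_of_mul hpos.ne'
  have hquot : 0 < b 1 0 / Real.sin φ := by
    rw [← mul_div_mul_right _ _ hsin, ← sq]; positivity
  let c : ℝ := √(b 1 0 / Real.sin φ)
  have hc : c ≠ 0 := (Real.sqrt_pos.2 hquot).ne'
  have hc_sq : Real.sin φ * c ^ 2 = b 1 0 := by
    rw [Real.sq_sqrt hquot.le, mul_div_cancel₀ _ hsin]
  let s : ℝ := (b 0 0 - Real.cos φ) / (c * Real.sin φ)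
  have hs : Real.sin φ * (s * c) = b 0 0 - Real.cos φ := by
    simp only [s]; field_simp
  have hcinv : Real.sin φ * c⁻¹ ^ 2 * b 1 0 = Real.sin φ ^ 2 := by
    rw [← hc_sq]; field_simp
  -- `d` moves the fixed point `i` of the rotations in the upper half-plane to that of `b`.
  let d : SL(2, ℝ) := ⟨!![c⁻¹, s; 0, c], by rw [det_fin_two_of]; simp [hc]⟩
  refine isConj_iff.2 ⟨d, Subtype.ext ?_⟩
  rw [coe_mul_rot_mul_inv, eta_fin_two (b : Matrix (Fin 2) (Fin 2) ℝ)]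
  apply fin_two_of_congr <;>
    simp only [d, of_apply, cons_val', cons_val_zero, cons_val_one, cons_val_fin_one]
  · linear_combination hs
  · refine mul_right_cancel₀ hb₁₀ ?_
    linear_combination -hcinv + Real.sin φ * s ^ 2 * hc_sq
      - (Real.sin φ * (s * c) + (b 0 0 - Real.cos φ)) * hs + hb - hφ - b 0 0 * htr
  · linear_combination hc_sq
  · linear_combination -hs - htr

lemma exists_irrational_isConj_rot {b : SL(2, ℝ)} {t : ℝ} (ht : Irrational t)
    (htr : trace (b : Matrix (Fin 2) (Fin 2) ℝ) = 2 * Real.cos (Real.pi * t)) :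
    ∃ s, Irrational s ∧ IsConj (rot (Real.pi * s)) b := by
  have hsin := sin_pi_mul_ne_zero_of_irrational ht
  have hb₁₀ : b 1 0 ≠ 0 := by
    intro h0
    have hb := det_eq_one_fin_two b
    rw [trace_fin_two] at htr
    have hzero : Real.sin (Real.pi * t) ^ 2 + (b 0 0 - Real.cos (Real.pi * t)) ^ 2 = 0 := by
      rw [h0] at hb
      linear_combination Real.cos_sq_add_sin_sq (Real.pi * t) - hb + b 0 0 * htr
    exact (by positivity : 0 < Real.sin (Real.pi * t) ^ 2 + _ ^ 2).ne' hzero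
  rcases (mul_ne_zero hb₁₀ hsin).lt_or_gt with hneg | hpos
  · refine ⟨-t, ht.neg, isConj_rot_of_trace_eq ?_ ?_⟩
    · rwa [mul_neg, Real.cos_neg]
    · rwa [mul_neg, Real.sin_neg, mul_neg, neg_pos]
  · exact ⟨t, ht, isConj_rot_of_trace_eq htr hpos⟩

lemma eq_top_of_isClosed_of_hyperbolic_of_elliptic (hH : IsClosed (H : Set SL(2, ℝ))) (hg : g ∈ H)
    (hg_tr : 2 < |trace (g : Matrix (Fin 2) (Fin 2) ℝ)|) {b : SL(2, ℝ)} (hb : b ∈ H) {t : ℝ}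
    (ht : Irrational t)
    (hb_tr : trace (b : Matrix (Fin 2) (Fin 2) ℝ) = 2 * Real.cos (Real.pi * t)) : H = ⊤ := by
  obtain ⟨s, hs, hconj⟩ := exists_irrational_isConj_rot ht hb_tr
  obtain ⟨d, rfl⟩ := isConj_iff.1 hconj
  let K : Subgroup SL(2, ℝ) := H.comap (MulAut.conj d).toMonoidHom
  have hK : IsClosed (K : Set SL(2, ℝ)) :=
    hH.preimage ((continuous_const.mul continuous_id).mul continuous_const)
  have hgK : d⁻¹ * g * d ∈ K := by simpa [K, mul_assoc] using hg
  have hg_tr' : 2 < |trace ((d⁻¹ * g * d : SL(2, ℝ)) : Matrix (Fin 2) (Fin 2) ℝ)| := by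
    rwa [Matrix.SpecialLinearGroup.coe_mul, trace_mul_comm, ← Matrix.SpecialLinearGroup.coe_mul,
      mul_inv_cancel_left]
  have hKtop : K = ⊤ :=
    eq_top_of_rot_mem (rot_mem_of_irrational hK hs hb) hgK
      (two_lt_frobSq_of_two_lt_abs_trace hg_tr')
  exact Subgroup.comap_injective (MulAut.conj d).surjective hKtop

theorem dense_of_hyperbolic_of_elliptic (hg : g ∈ H)
    (hg_tr : 2 < |trace (g : Matrix (Fin 2) (Fin 2) ℝ)|) {b : SL(2, ℝ)} (hb : b ∈ H) {t : ℝ}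
    (ht : Irrational t)
    (hb_tr : trace (b : Matrix (Fin 2) (Fin 2) ℝ) = 2 * Real.cos (Real.pi * t)) :
    Dense (H : Set SL(2, ℝ)) := by
  have htop : H.topologicalClosure = ⊤ :=
    eq_top_of_isClosed_of_hyperbolic_of_elliptic H.isClosed_topologicalClosure
      (H.le_topologicalClosure hg) hg_tr (H.le_topologicalClosure hb) ht hb_tr
  rw [dense_iff_closure_eq, ← Subgroup.topologicalClosure_coe, htop, Subgroup.coe_top]

end Density

section Representation

lemma continuous_freeGroupLift_apply {X α G : Type*} [TopologicalSpace X] [Group G]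
    [TopologicalSpace G] [IsTopologicalGroup G] {f : X → α → G}
    (hf : ∀ a, Continuous fun x ↦ f x a) (γ : FreeGroup α) :
    Continuous fun x ↦ FreeGroup.lift (f x) γ := by
  induction γ using FreeGroup.induction_on with
  | C1 => simpa only [map_one] using continuous_const
  | of a => simpa only [FreeGroup.lift_apply_of] using hf a
  | inv_of a ha => simpa only [map_inv] using! ha.inv
  | mul γ δ hγ hδ => simpa only [map_mul] using! hγ.mul hδ

/-- The hyperbolic element with axes the two diagonals and eigenvalues `exp r`, `exp (-r)`. -/
noncomputable def boost (r : ℝ) : SL(2, ℝ) :=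
  ⟨!![Real.cosh r, Real.sinh r; Real.sinh r, Real.cosh r], by
    rw [det_fin_two_of]; linear_combination Real.cosh_sq_sub_sinh_sq r⟩

lemma coe_boost (r : ℝ) :
    (boost r : Matrix (Fin 2) (Fin 2) ℝ) =
      !![Real.cosh r, Real.sinh r; Real.sinh r, Real.cosh r] :=
  rfl

/-- A family of elements of trace `2 * cos θ`, elliptic when `sin θ ≠ 0`. At `θ = 0` it is the
parabolic element acting as the translation by `-6` on the coordinate `x / y` of the projective
line. -/
noncomputable def bentShear (θ : ℝ) : SL(2, ℝ) :=
  ⟨!![Real.cos θ, -6; Real.sin θ ^ 2 / 6, Real.cos θ], by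
    rw [det_fin_two_of]; linear_combination Real.cos_sq_add_sin_sq θ⟩

lemma coe_bentShear (θ : ℝ) :
    (bentShear θ : Matrix (Fin 2) (Fin 2) ℝ) =
      !![Real.cos θ, -6; Real.sin θ ^ 2 / 6, Real.cos θ] :=
  rfl

/-- The representation of the free group on `a`, `b` sending `a` to `boost r` and `b` to
`bentShear θ`. -/
noncomputable def bentRep (r θ : ℝ) : FreeGroup (Fin 2) →* SL(2, ℝ) :=
  FreeGroup.lift ![boost r, bentShear θ]

lemma bentRep_of_zero (r θ : ℝ) : bentRep r θ (FreeGroup.of 0) = boost r :=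
  FreeGroup.lift_apply_of

lemma bentRep_of_one (r θ : ℝ) : bentRep r θ (FreeGroup.of 1) = bentShear θ :=
  FreeGroup.lift_apply_of

lemma continuous_bentShear : Continuous bentShear :=
  (continuous_fin_two_of Real.continuous_cos continuous_const
    ((Real.continuous_sin.pow 2).div_const 6) Real.continuous_cos).subtype_mk _

lemma continuous_bentRep_apply (r : ℝ) (γ : FreeGroup (Fin 2)) :
    Continuous fun θ ↦ bentRep r θ γ :=
  continuous_freeGroupLift_apply
    (Fin.forall_fin_two.2 ⟨continuous_const, continuous_bentShear⟩) γ

lemma trace_boost (r : ℝ) : trace (boost r : Matrix (Fin 2) (Fin 2) ℝ) = 2 * Real.cosh r :=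
  (trace_fin_two_of _ _ _ _).trans (two_mul _).symm

lemma trace_bentShear (θ : ℝ) :
    trace (bentShear θ : Matrix (Fin 2) (Fin 2) ℝ) = 2 * Real.cos θ :=
  (trace_fin_two_of _ _ _ _).trans (two_mul _).symm

lemma two_lt_abs_trace_boost {r : ℝ} (hr : r ≠ 0) :
    2 < |trace (boost r : Matrix (Fin 2) (Fin 2) ℝ)| := by
  rw [trace_boost]
  exact lt_abs.2 (.inl (by linarith [Real.one_lt_cosh.2 hr]))

lemma abs_trace_bentShear_lt_two {θ : ℝ} (hθ : Real.sin θ ≠ 0) :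
    |trace (bentShear θ : Matrix (Fin 2) (Fin 2) ℝ)| < 2 := by
  have hcos : |Real.cos θ| < 1 := by
    rw [← sq_lt_one_iff_abs_lt_one, Real.cos_sq']
    linarith [sq_pos_of_ne_zero hθ]
  rw [trace_bentShear, abs_mul, abs_two]
  linarith

end Representation

section PingPong

/-- The slope of the first column of `g`, with junk value `0` when that column is vertical. -/
noncomputable def columnSlope (g : SL(2, ℝ)) : ℝ :=
  g 1 0 / g 0 0

lemma mul_apply_zero_zero (h : SL(2, ℝ)) {g : SL(2, ℝ)} (hg : g 0 0 ≠ 0) :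
    (h * g : SL(2, ℝ)) 0 0 = (h 0 0 + h 0 1 * columnSlope g) * g 0 0 := by
  rw [Matrix.SpecialLinearGroup.coe_mul, mul_apply, Fin.sum_univ_two, columnSlope]
  field_simp

lemma columnSlope_mul (h : SL(2, ℝ)) {g : SL(2, ℝ)} (hg : g 0 0 ≠ 0) :
    columnSlope (h * g) = (h 1 0 + h 1 1 * columnSlope g) / (h 0 0 + h 0 1 * columnSlope g) := by
  have hg₁₀ : (h * g : SL(2, ℝ)) 1 0 = (h 1 0 + h 1 1 * columnSlope g) * g 0 0 := by
    rw [Matrix.SpecialLinearGroup.coe_mul, mul_apply, Fin.sum_univ_two, columnSlope]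
    field_simp
  rw [columnSlope, hg₁₀, mul_apply_zero_zero h hg, mul_div_mul_right _ _ hg]

/-- The exponent of a letter: `true` marks a generator and `false` its inverse, as in
`FreeGroup`. -/
def letterSign (e : Bool) : ℝ :=
  bif e then 1 else -1

lemma letterSign_sq (e : Bool) : letterSign e ^ 2 = 1 := by
  cases e <;> simp [letterSign]

lemma letterSign_eq_or_eq_neg (e f : Bool) :
    letterSign f = letterSign e ∨ letterSign f = -letterSign e := by
  cases e <;> cases f <;> simp [letterSign]

lemma coe_bentRep_mk_zero (r θ : ℝ) (e : Bool) :
    (bentRep r θ (FreeGroup.mk [(0, e)]) : Matrix (Fin 2) (Fin 2) ℝ) =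
      !![Real.cosh r, letterSign e * Real.sinh r; letterSign e * Real.sinh r, Real.cosh r] := by
  cases e <;>
    simp [bentRep, coe_boost, letterSign, Matrix.SpecialLinearGroup.coe_inv, adjugate_fin_two_of]

lemma coe_bentRep_mk_one (r : ℝ) (e : Bool) :
    (bentRep r 0 (FreeGroup.mk [(1, e)]) : Matrix (Fin 2) (Fin 2) ℝ) =
      !![1, -6 * letterSign e; 0, 1] := by
  cases e <;>
    simp [bentRep, coe_bentShear, letterSign, Matrix.SpecialLinearGroup.coe_inv,
      adjugate_fin_two_of]

/-- The slopes on which a letter acts in the ping-pong argument at `θ = 0`. The bound `1 / 3` comes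
from the fundamental domain `|x / y| ≤ 3` of the translation `bentShear 0`. -/
def pingDomain : Fin 2 × Bool → Set ℝ
  | (0, e) => {s | -(1 / 3) ≤ letterSign e * s}
  | (1, e) => {s | letterSign e * s ≤ 0 ∨ 1 / 3 ≤ letterSign e * s}

/-- The slopes into which a letter sends its `pingDomain`. -/
def pongImage : Fin 2 × Bool → Set ℝ
  | (0, e) => {s | 1 / 3 ≤ letterSign e * s}
  | (1, e) => {s | letterSign e * s ∈ Set.Icc (-(1 / 3)) 0}

lemma pongImage_subset_pingDomain {p q : Fin 2 × Bool} (hpq : q.1 = p.1 → q.2 = p.2) :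
    pongImage p ⊆ pingDomain q := by
  intro s hs
  match p, q with
  | (0, e), (0, f) =>
    obtain rfl : f = e := hpq rfl
    have hs : 1 / 3 ≤ letterSign f * s := hs
    change -(1 / 3) ≤ letterSign f * s
    linarith
  | (0, e), (1, f) =>
    have hs : 1 / 3 ≤ letterSign e * s := hs
    change letterSign f * s ≤ 0 ∨ 1 / 3 ≤ letterSign f * s
    rcases letterSign_eq_or_eq_neg e f with h | h <;> rw [h]
    · exact .inr hs
    · exact .inl (by linarith)
  | (1, e), (0, f) =>
    obtain ⟨hs₁, hs₂⟩ : letterSign e * s ∈ Set.Icc (-(1 / 3)) 0 := hs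
    change -(1 / 3) ≤ letterSign f * s
    rcases letterSign_eq_or_eq_neg e f with h | h <;> rw [h] <;> linarith
  | (1, e), (1, f) =>
    obtain rfl : f = e := hpq rfl
    exact .inl hs.2

lemma zero_mem_pingDomain : ∀ p, 0 ∈ pingDomain p
  | (0, e) => by simp [pingDomain]
  | (1, e) => by simp [pingDomain]

lemma three_mul_cosh_le_five_mul_sinh {r : ℝ} (hr : Real.log 2 ≤ r) :
    3 * Real.cosh r ≤ 5 * Real.sinh r := by
  have hexp : 2 ≤ Real.exp r := (Real.log_le_iff_le_exp two_pos).1 hr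
  have hexp_neg : Real.exp (-r) ≤ 1 / 2 := by
    rw [Real.exp_neg, inv_eq_one_div]; gcongr
  rw [Real.cosh_eq, Real.sinh_eq]
  linarith

lemma exp_div_three_le_cosh_add_sinh_mul {r v : ℝ} (hr : 0 ≤ r) (hv : -(1 / 3) ≤ v) :
    Real.exp r / 3 ≤ Real.cosh r + Real.sinh r * v := by
  have hsinh : 0 ≤ Real.sinh r := Real.sinh_nonneg_iff.2 hr
  have hlt : Real.sinh r < Real.cosh r := Real.sinh_lt_cosh r
  rw [← Real.cosh_add_sinh]
  nlinarith

lemma one_third_le_boost_slope {r v : ℝ} (hr : Real.log 2 ≤ r) (hv : -(1 / 3) ≤ v) :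
    1 / 3 ≤ (Real.sinh r + Real.cosh r * v) / (Real.cosh r + Real.sinh r * v) := by
  have hr₀ : 0 ≤ r := (Real.log_nonneg one_le_two).trans hr
  have hpos : 0 < Real.cosh r + Real.sinh r * v :=
    lt_of_lt_of_le (by positivity) (exp_div_three_le_cosh_add_sinh_mul hr₀ hv)
  rw [le_div_iff₀ hpos]
  nlinarith [three_mul_cosh_le_five_mul_sinh hr, Real.sinh_lt_cosh r, Real.cosh_pos r]

lemma one_le_abs_one_sub_six_mul {v : ℝ} (hv : v ≤ 0 ∨ 1 / 3 ≤ v) : 1 ≤ |1 - 6 * v| :=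
  le_abs.2 (hv.imp (fun h ↦ by linarith) (fun h ↦ by linarith))

lemma shear_slope_mem_Icc {v : ℝ} (hv : v ≤ 0 ∨ 1 / 3 ≤ v) :
    v / (1 - 6 * v) ∈ Set.Icc (-(1 / 3)) 0 := by
  rcases hv with hv | hv
  · have hpos : 0 < 1 - 6 * v := by linarith
    exact ⟨(le_div_iff₀ hpos).2 (by linarith), div_nonpos_of_nonpos_of_nonneg hv hpos.le⟩
  · have hneg : 1 - 6 * v < 0 := by linarith
    exact ⟨(le_div_iff_of_neg hneg).2 (by linarith),
      div_nonpos_of_nonneg_of_nonpos (by linarith) hneg.le⟩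

lemma bentRep_mk_zero_ping_pong {r : ℝ} (hr : Real.log 2 ≤ r) (e : Bool) {g : SL(2, ℝ)}
    (hg : g 0 0 ≠ 0) (hs : columnSlope g ∈ pingDomain (0, e)) :
    Real.exp r / 3 * |g 0 0| ≤ |(bentRep r 0 (FreeGroup.mk [(0, e)]) * g : SL(2, ℝ)) 0 0| ∧
      columnSlope (bentRep r 0 (FreeGroup.mk [(0, e)]) * g) ∈ pongImage (0, e) := by
  have hr₀ : 0 ≤ r := (Real.log_nonneg one_le_two).trans hr
  have hv : -(1 / 3) ≤ letterSign e * columnSlope g := hs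
  rw [mul_apply_zero_zero _ hg, columnSlope_mul _ hg, abs_mul, coe_bentRep_mk_zero]
  simp only [of_apply, cons_val', cons_val_zero, cons_val_one, cons_val_fin_one]
  have hden : Real.cosh r + letterSign e * Real.sinh r * columnSlope g =
      Real.cosh r + Real.sinh r * (letterSign e * columnSlope g) := by ring
  have hnum : letterSign e * (letterSign e * Real.sinh r + Real.cosh r * columnSlope g) =
      Real.sinh r + Real.cosh r * (letterSign e * columnSlope g) := by
    linear_combination Real.sinh r * letterSign_sq e
  rw [hden]
  refine ⟨?_, ?_⟩
  · gcongr
    exact (exp_div_three_le_cosh_add_sinh_mul hr₀ hv).trans (le_abs_self _)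
  · change 1 / 3 ≤ letterSign e * (_ / _)
    rw [← mul_div_assoc, hnum]
    exact one_third_le_boost_slope hr hv

lemma bentRep_mk_one_ping_pong (r : ℝ) (e : Bool) {g : SL(2, ℝ)}
    (hg : g 0 0 ≠ 0) (hs : columnSlope g ∈ pingDomain (1, e)) :
    |g 0 0| ≤ |(bentRep r 0 (FreeGroup.mk [(1, e)]) * g : SL(2, ℝ)) 0 0| ∧
      columnSlope (bentRep r 0 (FreeGroup.mk [(1, e)]) * g) ∈ pongImage (1, e) := by
  have hv : letterSign e * columnSlope g ≤ 0 ∨ 1 / 3 ≤ letterSign e * columnSlope g := hs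
  rw [mul_apply_zero_zero _ hg, columnSlope_mul _ hg, abs_mul, coe_bentRep_mk_one]
  simp only [of_apply, cons_val', cons_val_zero, cons_val_one, cons_val_fin_one]
  have hden : 1 + -6 * letterSign e * columnSlope g = 1 - 6 * (letterSign e * columnSlope g) := by
    ring
  rw [hden, zero_add, one_mul]
  refine ⟨le_mul_of_one_le_left (abs_nonneg _) (one_le_abs_one_sub_six_mul hv), ?_⟩
  change letterSign e * (_ / _) ∈ Set.Icc (-(1 / 3)) 0
  rw [← mul_div_assoc]
  exact shear_slope_mem_Icc hv

lemma bentRep_mk_singleton_ping_pong {r : ℝ} (hr : Real.log 2 ≤ r) (p : Fin 2 × Bool)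
    {g : SL(2, ℝ)} (hg : g 0 0 ≠ 0) (hs : columnSlope g ∈ pingDomain p) :
    (Real.exp r / 3) ^ (if decide (p.1 = 0) then 1 else 0) * |g 0 0| ≤
        |(bentRep r 0 (FreeGroup.mk [p]) * g : SL(2, ℝ)) 0 0| ∧
      columnSlope (bentRep r 0 (FreeGroup.mk [p]) * g) ∈ pongImage p := by
  match p with
  | (0, e) => simpa using bentRep_mk_zero_ping_pong hr e hg hs
  | (1, e) => simpa using bentRep_mk_one_ping_pong r e hg hs

lemma bentRep_mk_ping_pong {r : ℝ} (hr : Real.log 2 ≤ r) {L : List (Fin 2 × Bool)}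
    (hL : FreeGroup.IsReduced L) :
    (Real.exp r / 3) ^ L.countP (fun p ↦ decide (p.1 = 0)) ≤
        |bentRep r 0 (FreeGroup.mk L) 0 0| ∧
      ∀ p, FreeGroup.IsReduced (p :: L) →
        columnSlope (bentRep r 0 (FreeGroup.mk L)) ∈ pingDomain p := by
  induction L with
  | nil =>
    rw [← FreeGroup.one_eq_mk, map_one]
    exact ⟨by simp, fun p _ ↦ by simpa [columnSlope] using zero_mem_pingDomain p⟩
  | cons q L ih =>
    obtain ⟨hgrowth, hping⟩ := ih (FreeGroup.IsReduced.infix hL (List.infix_cons L.infix_rfl))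
    set g := bentRep r 0 (FreeGroup.mk L)
    have hmul : bentRep r 0 (FreeGroup.mk (q :: L)) = bentRep r 0 (FreeGroup.mk [q]) * g := by
      rw [← map_mul, FreeGroup.mul_mk, List.singleton_append]
    have hg : g 0 0 ≠ 0 := abs_pos.1 (lt_of_lt_of_le (by positivity) hgrowth)
    obtain ⟨hstretch, himage⟩ := bentRep_mk_singleton_ping_pong hr q hg (hping q hL)
    rw [hmul]
    refine ⟨?_, fun p hp ↦
      pongImage_subset_pingDomain (FreeGroup.isReduced_cons_cons.1 hp).1 himage⟩
    rw [List.countP_cons, add_comm, pow_add]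
    exact (mul_le_mul_of_nonneg_left hgrowth (by positivity)).trans hstretch

lemma abs_apply_le_opNorm2 (M : Matrix (Fin 2) (Fin 2) ℝ) (i j : Fin 2) :
    |M i j| ≤ opNorm2 M := by
  let e : EuclideanSpace ℝ (Fin 2) := EuclideanSpace.single j 1
  calc |M i j| = ‖toEuclideanLin M e i‖ := by simp [e, toLpLin_apply]
    _ ≤ ‖toEuclideanLin M e‖ := PiLp.norm_apply_le _ i
    _ ≤ opNorm2 M * ‖e‖ :=
      (LinearMap.toContinuousLinearMap (toEuclideanLin M)).le_opNorm e
    _ = opNorm2 M := by simp [e]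

theorem mul_lenA_le_mu2_bentRep {r : ℝ} (hr : Real.log 2 ≤ r) (γ : FreeGroup (Fin 2)) :
    2 * (r - Real.log 3) * lenA γ ≤ mu2 (bentRep r 0 γ) := by
  have hred : FreeGroup.IsReduced γ.toWord := FreeGroup.isReduced_toWord
  have hpos : 0 < (Real.exp r / 3) ^ lenA γ := by positivity
  have hle : (Real.exp r / 3) ^ lenA γ ≤ opNorm2 (bentRep r 0 γ) :=
    calc (Real.exp r / 3) ^ lenA γ ≤ |bentRep r 0 γ 0 0| := by
          simpa only [FreeGroup.mk_toWord] using! (bentRep_mk_ping_pong hr hred).1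
      _ ≤ opNorm2 (bentRep r 0 γ) := abs_apply_le_opNorm2 _ 0 0
  calc 2 * (r - Real.log 3) * lenA γ = 2 * Real.log ((Real.exp r / 3) ^ lenA γ) := by
        rw [Real.log_pow, Real.log_div (Real.exp_ne_zero r) three_ne_zero, Real.log_exp]; ring
    _ ≤ mu2 (bentRep r 0 γ) :=
      mul_le_mul_of_nonneg_left (Real.log_le_log hpos hle) zero_le_two

end PingPong

theorem stmt1_general (κ : ℝ) (hκ : 0 < κ) :
    ∃ ρ : ℝ → (FreeGroup (Fin 2) →* SL(2, ℝ)),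
      (∀ γ, Continuous fun t ↦ (ρ t γ : Matrix (Fin 2) (Fin 2) ℝ)) ∧
      (∀ γ, κ * lenA γ ≤ mu2 (ρ 0 γ)) ∧
      ∀ t, Irrational t →
        (∀ g : SL(2, ℝ), (g : Matrix (Fin 2) (Fin 2) ℝ) ∈
          closure (Set.range fun γ ↦ (ρ t γ : Matrix (Fin 2) (Fin 2) ℝ))) ∧
        2 < |trace (ρ t (FreeGroup.of 0) : Matrix (Fin 2) (Fin 2) ℝ)| ∧
        |trace (ρ t (FreeGroup.of 1) : Matrix (Fin 2) (Fin 2) ℝ)| < 2 := by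
  obtain ⟨r, hκr⟩ : ∃ r, 2 * (r - Real.log 3) = κ := ⟨κ / 2 + Real.log 3, by ring⟩
  have hr : Real.log 2 ≤ r := by
    have : Real.log 2 ≤ Real.log 3 := Real.log_le_log two_pos (by norm_num)
    linarith
  have hr₀ : r ≠ 0 := (lt_of_lt_of_le (Real.log_pos one_lt_two) hr).ne'
  refine ⟨fun t ↦ bentRep r (Real.pi * t), fun γ ↦ ?_, fun γ ↦ ?_, fun t ht ↦ ?_⟩
  · exact continuous_subtype_val.comp
      ((continuous_bentRep_apply r γ).comp (continuous_const_mul Real.pi))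
  · simpa only [mul_zero, hκr] using mul_lenA_le_mu2_bentRep hr γ
  · have hyp := two_lt_abs_trace_boost hr₀
    have hdense := dense_of_hyperbolic_of_elliptic (H := (bentRep r (Real.pi * t)).range)
      ⟨_, bentRep_of_zero r _⟩ hyp ⟨_, bentRep_of_one r _⟩ ht (trace_bentShear _)
    refine ⟨fun g ↦ ?_, ?_, ?_⟩
    · exact map_mem_closure continuous_subtype_val (hdense g)
        (Set.forall_mem_range.2 fun γ ↦ ⟨γ, rfl⟩)
    · rwa [bentRep_of_zero]
    · rw [bentRep_of_one]
      exact abs_trace_bentShear_lt_two (sin_pi_mul_ne_zero_of_irrational ht)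

/-- For any `κ > 0` there is a continuous family `(ρ_t)_{t ∈ [0,1]}` of homomorphisms from
the free group on two generators to `SL(2,ℝ)` with `μ(ρ₀(γ)) ≥ κ·ℓ_a(γ)`, while for every
irrational `t` the image of `ρ_t` is dense, `ρ_t(a)` is hyperbolic and `ρ_t(b)` is elliptic. -/
theorem stmt1 (κ : ℝ) (hκ : 0 < κ) :
    ∃ ρ : ℝ → (FreeGroup (Fin 2) →* Matrix.SpecialLinearGroup (Fin 2) ℝ),
      -- (1) continuity in `t` (for the matrix topology)
      (∀ γ : FreeGroup (Fin 2),
        ContinuousOn (fun t : ℝ => ((ρ t γ : Matrix (Fin 2) (Fin 2) ℝ))) (Set.Icc 0 1)) ∧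
      -- (2) linear lower bound on the Cartan projection at `t = 0`
      (∀ γ : FreeGroup (Fin 2), κ * (lenA γ : ℝ) ≤ mu2 (ρ 0 γ)) ∧
      -- (3) for irrational `t`: dense image, `ρ_t(a)` hyperbolic, `ρ_t(b)` elliptic
      (∀ t ∈ Set.Icc (0 : ℝ) 1, Irrational t →
        (∀ g : Matrix.SpecialLinearGroup (Fin 2) ℝ,
          (g : Matrix (Fin 2) (Fin 2) ℝ) ∈
            closure (Set.range fun γ : FreeGroup (Fin 2) =>
              ((ρ t γ : Matrix (Fin 2) (Fin 2) ℝ)))) ∧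
        2 < |Matrix.trace ((ρ t (FreeGroup.of 0) : Matrix (Fin 2) (Fin 2) ℝ))| ∧
        |Matrix.trace ((ρ t (FreeGroup.of 1) : Matrix (Fin 2) (Fin 2) ℝ))| < 2) := by
  obtain ⟨ρ, hcont, hmu, hirr⟩ := stmt1_general κ hκ
  exact ⟨ρ, fun γ ↦ (hcont γ).continuousOn, hmu, fun t _ ht ↦ hirr t ht⟩
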